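/- (Theorem 1 of the paper: DGDS achieves a 1/16-approximation.) Let λ ∈ (0,1) and k ≥ 2. If a set A ⊆ S_1 ∪ … ∪ S_l with |A| = k satisfies F(A) ≥ (1/2)·F(opt(S_1 ∪ … ∪ S_l | k)) (the guarantee of the AltGreedy aggregation step of the DGDS algorithm), then F(A) ≥ (1/16)·F(O); i.e., the DGDS distributed algorithm returns a 1/16-approximation of the maximum of F over cardinality-k subsets of U. -/

import Mathlib

open Finset

def IsGreedySel {ι : Type*} (qf : ι → ℝ) (df : ι → ι → ℝ) (a b : ℝ)
    (T : Finset ι) (k : ℕ) (z : Fin k → ι) : Prop :=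
  Function.Injective z ∧ (∀ i, z i ∈ T) ∧
  (∀ hk : 0 < k, ∀ t ∈ T, qf t ≤ qf (z ⟨0, hk⟩)) ∧
  ∀ i : Fin k, ∀ t ∈ T, (∀ j : Fin k, j < i → t ≠ z j) →
    a * qf t + b * ∑ j ∈ Finset.filter (fun j => j < i) Finset.univ, df t (z j) ≤
      a * qf (z i) + b * ∑ j ∈ Finset.filter (fun j => j < i) Finset.univ, df (z i) (z j)

noncomputable def Qsum {M : Type*} (q : M → ℝ) (S : Finset M) : ℝ := ∑ u ∈ S, q u

noncomputable def Dsum {M : Type*} [MetricSpace M] [DecidableEq M] (S : Finset M) : ℝ :=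
  ∑ p ∈ S.offDiag, dist p.1 p.2

noncomputable def Fobj {M : Type*} [MetricSpace M] [DecidableEq M]
    (q : M → ℝ) (lam : ℝ) (S : Finset M) : ℝ :=
  lam * Qsum q S + (1 - lam) * Dsum S

def IsOptSubset {M : Type*} [MetricSpace M] [DecidableEq M] (q : M → ℝ) (lam : ℝ)
    (T : Finset M) (k : ℕ) (O : Finset M) : Prop :=
  O ⊆ T ∧ O.card = k ∧ ∀ B ⊆ T, B.card = k → Fobj q lam B ≤ Fobj q lam O

/-!
Greedy selection charges every rejected point `t` of a part against the selected set `S` of that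
part: summing the greedy inequalities over the `k` rounds bounds
`k * lam * q t + (1 - lam) * ∑ i, ∑ j < i, d(t, z j)` by `lam * Q(S) + (1 - lam) * D(S) / 2`, and
`d(t, z i) ≤ d(t, z j) + d(z i, z j)` for `j < i` turns the sum over pairs into
`(k - 1) * ∑ i, d(t, z i)`. Hence the average over `s ∈ S` of the cost of replacing `t` by `s` is
small. Averaging over the cyclic shifts of an injection, each part of `O` can be moved injectively
into the selected set of its part, fixing what is already selected, at a total cost of at most
`2 * F(opt)`. By the triangle inequality the move lowers `F(O)` by at most twice its cost, and the
image has at most the optimal value, so `F(O) ≤ 5 * F(opt)`.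
-/

section OffDiag

theorem sum_offDiag_eq_sum_sum_lt {κ N : Type*} [LinearOrder κ] [AddCommMonoid N]
    (s : Finset κ) (f : κ → κ → N) :
    ∑ p ∈ s.offDiag, f p.1 p.2 = ∑ i ∈ s, ∑ j ∈ s with j < i, (f i j + f j i) := by
  simp only [sum_add_distrib]
  rw [← sum_filter_add_sum_filter_not s.offDiag (fun p ↦ p.2 < p.1)]
  congr 1
  · exact sum_finset_product' _ _ _ (by grind)
  · exact sum_finset_product_right' _ _ _ (by grind)

theorem sum_offDiag_fst_add_snd {κ R : Type*} [Semiring R] (s : Finset κ) (f : κ → R) :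
    ∑ p ∈ s.offDiag, (f p.1 + f p.2) = 2 * ((#s - 1 : ℕ) * ∑ i ∈ s, f i) := by
  classical
  have sum_fst : ∑ p ∈ s.offDiag, f p.1 = (#s - 1 : ℕ) * ∑ i ∈ s, f i := by
    rw [sum_finset_product s.offDiag s s.erase (by grind), mul_sum]
    refine sum_congr rfl fun i hi ↦ ?_
    simp only [sum_const, nsmul_eq_mul, card_erase_of_mem hi]
  have sum_snd : ∑ p ∈ s.offDiag, f p.2 = ∑ p ∈ s.offDiag, f p.1 :=
    sum_nbij' Prod.swap Prod.swap (by grind) (by grind) (by simp) (by simp) (by simp)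
  rw [sum_add_distrib, sum_snd, sum_fst, two_mul]

theorem card_sub_one_mul_sum_dist_le {κ M : Type*} [LinearOrder κ] [PseudoMetricSpace M]
    (s : Finset κ) (z : κ → M) (t : M) :
    (#s - 1 : ℕ) * ∑ i ∈ s, dist t (z i) ≤
      2 * ∑ i ∈ s, ∑ j ∈ s with j < i, dist t (z j) +
        ∑ i ∈ s, ∑ j ∈ s with j < i, dist (z i) (z j) := by
  have triangle (i j : κ) : dist t (z i) ≤ dist t (z j) + dist (z i) (z j) := by
    simpa only [dist_comm (z i) (z j)] using dist_triangle t (z j) (z i)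
  have pairs : 2 * ((#s - 1 : ℕ) * ∑ i ∈ s, dist t (z i)) ≤
      ∑ i ∈ s, ∑ j ∈ s with j < i, 2 * (2 * dist t (z j) + dist (z i) (z j)) := by
    rw [← sum_offDiag_fst_add_snd s fun i ↦ dist t (z i),
      sum_offDiag_eq_sum_sum_lt s fun i j ↦ dist t (z i) + dist t (z j)]
    gcongr with i _ j _
    linarith [triangle i j]
  simp only [← mul_sum, sum_add_distrib] at pairs
  linarith

end OffDiag

section Matching

variable {α β ι N : Type*}

theorem exists_embedding_card_nsmul_sum_le [Fintype α] [Fintype β] [AddCommMonoid N]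
    [LinearOrder N] [IsOrderedCancelAddMonoid N]
    (h : Fintype.card α ≤ Fintype.card β) (c : α → β → N) :
    ∃ f : α ↪ β, Fintype.card β • ∑ a, c a (f a) ≤ ∑ a, ∑ b, c a b := by
  obtain ⟨e⟩ := Function.Embedding.nonempty_of_card_le h
  cases isEmpty_or_nonempty β with
  | inl _ => exact ⟨e, by simp⟩
  | inr _ =>
    -- Any group structure on `β` will do: the shifts `e + g` have average cost `∑ a, ∑ b, c a b`.
    obtain ⟨_⟩ := nonempty_commRing β
    have sum_shifts : ∑ g, ∑ a, c a (e a + g) = ∑ a, ∑ b, c a b := by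
      rw [sum_comm]
      exact sum_congr rfl fun a _ ↦ Equiv.sum_comp (Equiv.addLeft (e a)) (c a)
    obtain ⟨g, -, hg⟩ := exists_le_of_sum_le (s := univ)
      (f := fun g ↦ Fintype.card β • ∑ a, c a (e a + g)) (g := fun _ ↦ ∑ a, ∑ b, c a b)
      univ_nonempty (by rw [sum_nsmul, sum_shifts, sum_const, card_univ])
    exact ⟨e.trans (Equiv.addRight g).toEmbedding, hg⟩

theorem exists_injOn_fixing_inter_card_nsmul_sum_le [DecidableEq α] [AddCommMonoid N]
    [LinearOrder N] [IsOrderedCancelAddMonoid N]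
    {A B : Finset α} (h : #A ≤ #B) (c : α → α → N) :
    ∃ f : α → α, Set.MapsTo f A B ∧ Set.InjOn f A ∧ (∀ a ∈ A ∩ B, f a = a) ∧
      #(B \ A) • ∑ a ∈ A \ B, c a (f a) ≤ ∑ a ∈ A \ B, ∑ b ∈ B \ A, c a b := by
  obtain ⟨g, hg⟩ := exists_embedding_card_nsmul_sum_le
    (by simpa [card_sdiff_le_card_sdiff_iff] using h)
    (fun (a : ↥(A \ B)) (b : ↥(B \ A)) ↦ c a b)
  let f a := if ha : a ∈ A \ B then (g ⟨a, ha⟩ : α) else a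
  have f_coe (a : ↥(A \ B)) : f a = g a := dif_pos a.2
  have f_fix {a : α} (ha : a ∉ A \ B) : f a = a := dif_neg ha
  have f_mem {a : α} (ha : a ∈ A \ B) : f a ∈ B \ A := by
    rw [f_coe ⟨a, ha⟩]
    exact (g ⟨a, ha⟩).2
  have f_inj {a b : α} (ha : a ∈ A \ B) (hb : b ∈ A \ B) (hab : f a = f b) : a = b := by
    rw [f_coe ⟨a, ha⟩, f_coe ⟨b, hb⟩] at hab
    exact congrArg Subtype.val (g.injective (Subtype.ext hab))
  refine ⟨f, ?_, ?_, fun a ha ↦ f_fix (by grind), ?_⟩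
  · intro a _
    by_cases ha : a ∈ A \ B
    · exact (mem_sdiff.1 (f_mem ha)).1
    · grind
  · intro a _ b _ hab
    by_cases ha : a ∈ A \ B <;> by_cases hb : b ∈ A \ B
    · exact f_inj ha hb hab
    all_goals grind
  · rw [← sum_coe_sort (A \ B), ← sum_coe_sort (A \ B)]
    simpa only [f_coe, sum_coe_sort (B \ A), Fintype.card_coe] using hg

theorem exists_forall_eqOn_of_pairwise_disjoint [Nonempty (α → β)] {A : ι → Set α}
    (hA : Pairwise (Function.onFun Disjoint A)) (f : ι → α → β) :
    ∃ g : α → β, ∀ i, Set.EqOn g (f i) (A i) := by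
  have exists_value (a : α) : ∃ b, ∀ i, a ∈ A i → b = f i a := by
    by_cases ha : ∃ i, a ∈ A i
    · obtain ⟨i, hi⟩ := ha
      refine ⟨f i a, fun j hj ↦ ?_⟩
      rw [hA.eq (Set.not_disjoint_iff.2 ⟨a, hi, hj⟩)]
    · exact ⟨Classical.arbitrary (α → β) a, fun i hi ↦ (ha ⟨i, hi⟩).elim⟩
  choose g hg using exists_value
  exact ⟨g, fun i a ha ↦ hg a i ha⟩

theorem injOn_iUnion_of_eqOn {A : ι → Set α} {B : ι → Set β} {f : ι → α → β} {g : α → β}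
    (hB : Pairwise (Function.onFun Disjoint B)) (maps : ∀ i, Set.MapsTo (f i) (A i) (B i))
    (inj : ∀ i, Set.InjOn (f i) (A i)) (hg : ∀ i, Set.EqOn g (f i) (A i)) :
    Set.InjOn g (⋃ i, A i) := by
  intro a ha b hb hab
  obtain ⟨i, hi⟩ := Set.mem_iUnion.1 ha
  obtain ⟨j, hj⟩ := Set.mem_iUnion.1 hb
  rw [hg i hi, hg j hj] at hab
  obtain rfl := hB.eq (Set.not_disjoint_iff.2 ⟨f i a, maps i hi, hab ▸ maps j hj⟩)
  exact inj i hi hj hab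

theorem sum_le_of_forall_card_mul_sum_inter_le [Fintype ι] [DecidableEq α] {U : ι → Finset α}
    (hU : Pairwise (Function.onFun Disjoint U)) {C : Finset α} (hC : C ⊆ univ.biUnion U)
    {g : α → ℝ} {B : ℝ} (hB : 0 ≤ B)
    (h : ∀ i, #C * ∑ a ∈ C ∩ U i, g a ≤ #(C ∩ U i) * B) : ∑ a ∈ C, g a ≤ B := by
  obtain rfl | hne := C.eq_empty_or_nonempty
  · simpa using hB
  have disj : Pairwise (Function.onFun Disjoint fun i ↦ C ∩ U i) :=
    fun i j hij ↦ (hU hij).mono inter_subset_right inter_subset_right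
  have hC_eq : C = univ.biUnion fun i ↦ C ∩ U i := by
    rw [← inter_biUnion, inter_eq_left.2 hC]
  have sum_eq : ∑ a ∈ C, g a = ∑ i, ∑ a ∈ C ∩ U i, g a := by
    conv_lhs => rw [hC_eq]
    exact sum_biUnion (disj.set_pairwise _)
  have card_eq : #C = ∑ i, #(C ∩ U i) := by
    conv_lhs => rw [hC_eq]
    exact card_biUnion fun i _ j _ hij ↦ disj hij
  refine le_of_mul_le_mul_left ?_ (Nat.cast_pos.2 hne.card_pos : (0 : ℝ) < #C)
  calc (#C : ℝ) * ∑ a ∈ C, g a = ∑ i, #C * ∑ a ∈ C ∩ U i, g a := by rw [sum_eq, mul_sum]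
    _ ≤ ∑ i, #(C ∩ U i) * B := sum_le_sum fun i _ ↦ h i
    _ = #C * B := by rw [← sum_mul, card_eq, Nat.cast_sum]

theorem biUnion_inter_eq_of_pairwise_disjoint [Fintype ι] [DecidableEq α] {U S : ι → Finset α}
    (hU : Pairwise (Function.onFun Disjoint U)) (hSU : ∀ i, S i ⊆ U i) (i : ι) :
    univ.biUnion S ∩ U i = S i := by
  ext a
  simp only [mem_inter, mem_biUnion, mem_univ, true_and]
  refine ⟨fun ⟨⟨j, hj⟩, hi⟩ ↦ ?_, fun ha ↦ ⟨⟨i, ha⟩, hSU i ha⟩⟩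
  rwa [hU.eq (not_disjoint_iff.2 ⟨a, hi, hSU j hj⟩)]

theorem exists_injOn_fixing_biUnion_card_nsmul_sum_le [Fintype ι] [DecidableEq α]
    [AddCommMonoid N] [LinearOrder N] [IsOrderedCancelAddMonoid N] {U S : ι → Finset α}
    (hU : Pairwise (Function.onFun Disjoint U)) (hSU : ∀ i, S i ⊆ U i)
    {O : Finset α} (hO : O ⊆ univ.biUnion U) (hOS : ∀ i, #(O ∩ U i) ≤ #(S i)) (c : α → α → N) :
    ∃ π : α → α, Set.MapsTo π O (univ.biUnion S) ∧ Set.InjOn π O ∧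
      (∀ a ∈ O ∩ univ.biUnion S, π a = a) ∧ ∀ i,
        #(S i \ (O ∩ U i)) • ∑ a ∈ (O ∩ U i) \ S i, c a (π a) ≤
          ∑ a ∈ (O ∩ U i) \ S i, ∑ s ∈ S i \ (O ∩ U i), c a s := by
  choose f f_maps f_inj f_fix f_cost using fun i ↦
    exists_injOn_fixing_inter_card_nsmul_sum_le (hOS i) c
  have : Nonempty (α → α) := ⟨id⟩
  obtain ⟨π, hπ⟩ := exists_forall_eqOn_of_pairwise_disjoint
    (A := fun i ↦ (O ∩ U i : Finset α))
    (fun i j hij ↦ disjoint_coe.2 ((hU hij).mono inter_subset_right inter_subset_right)) f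
  have hO_eq : (O : Set α) = ⋃ i, (O ∩ U i : Finset α) := by
    ext a
    simpa using fun ha : a ∈ O ↦ by simpa using hO ha
  refine ⟨π, ?_, ?_, fun a ha ↦ ?_, fun i ↦ ?_⟩
  · rw [hO_eq, Set.mapsTo_iUnion]
    exact fun i ↦ ((f_maps i).congr (hπ i).symm).mono_right
      (coe_subset.2 (subset_biUnion_of_mem S (mem_univ i)))
  · rw [hO_eq]
    exact injOn_iUnion_of_eqOn (fun i j hij ↦ disjoint_coe.2 ((hU hij).mono (hSU i) (hSU j)))
      f_maps f_inj hπ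
  · obtain ⟨haO, haS⟩ := mem_inter.1 ha
    obtain ⟨i, -, hi⟩ := mem_biUnion.1 haS
    have ha_part : a ∈ O ∩ U i := mem_inter.2 ⟨haO, hSU i hi⟩
    rw [hπ i ha_part, f_fix i a (mem_inter.2 ⟨ha_part, hi⟩)]
  · rw [sum_congr rfl fun a ha ↦ by rw [hπ i (mem_sdiff.1 ha).1]]
    exact f_cost i

theorem exists_injOn_mapsTo_biUnion_sum_le [Fintype ι] [DecidableEq α] {U S : ι → Finset α}
    (hU : Pairwise (Function.onFun Disjoint U)) (hSU : ∀ i, S i ⊆ U i)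
    {O : Finset α} (hO : O ⊆ univ.biUnion U) (hOS : ∀ i, #O ≤ #(S i))
    {c : α → α → ℝ} (hc : ∀ a b, 0 ≤ c a b) {B : ℝ} (hB : 0 ≤ B)
    (hcB : ∀ i, ∀ a ∈ U i \ S i, ∑ s ∈ S i, c a s ≤ B) :
    ∃ π : α → α, Set.MapsTo π O (univ.biUnion S) ∧ Set.InjOn π O ∧
      ∑ a ∈ O with π a ≠ a, c a (π a) ≤ B := by
  obtain ⟨π, π_maps, π_inj, π_fix, π_cost⟩ := exists_injOn_fixing_biUnion_card_nsmul_sum_le hU hSU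
    hO (fun i ↦ (card_le_card inter_subset_left).trans (hOS i)) c
  refine ⟨π, π_maps, π_inj, ?_⟩
  let C := O \ univ.biUnion S
  have moved_subset : O.filter (fun a ↦ π a ≠ a) ⊆ C := by grind
  refine (sum_le_sum_of_subset_of_nonneg moved_subset fun a _ _ ↦ hc a _).trans ?_
  refine sum_le_of_forall_card_mul_sum_inter_le hU (sdiff_subset.trans hO) hB fun i ↦ ?_
  have C_inter : C ∩ U i = (O ∩ U i) \ S i := by
    have := biUnion_inter_eq_of_pairwise_disjoint hU hSU i
    grind
  have card_C_le : #C ≤ #(S i \ (O ∩ U i)) := by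
    have inter_card_le : #(S i ∩ (O ∩ U i)) ≤ #(O ∩ univ.biUnion S) :=
      card_le_card (by grind)
    have := card_sdiff_add_card_inter O (univ.biUnion S)
    have := card_sdiff_add_card_inter (S i) (O ∩ U i)
    have := hOS i
    lia
  rw [C_inter]
  calc (#C : ℝ) * ∑ a ∈ (O ∩ U i) \ S i, c a (π a)
      ≤ #(S i \ (O ∩ U i)) * ∑ a ∈ (O ∩ U i) \ S i, c a (π a) := by
        gcongr
        exact sum_nonneg fun a _ ↦ hc a _
    _ ≤ ∑ a ∈ (O ∩ U i) \ S i, ∑ s ∈ S i \ (O ∩ U i), c a s := by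
        simpa only [nsmul_eq_mul] using π_cost i
    _ ≤ #((O ∩ U i) \ S i) * B := by
        rw [← nsmul_eq_mul]
        refine sum_le_card_nsmul _ _ _ fun a ha ↦ ?_
        exact (sum_le_sum_of_subset_of_nonneg sdiff_subset fun s _ _ ↦ hc a s).trans
          (hcB i a (by grind))

end Matching

section ReplacementCost

variable {M : Type*} [PseudoMetricSpace M]

/-- The price charged for replacing the element `o` of a `k`-element set by `s`. Replacing `o`
loses at most `lam * q o` in quality and `2 * (k - 1) * (1 - lam) * dist o s` in dispersion,
together at most twice this price. The subtraction `k - 1` is truncated, so that the price is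
nonnegative for every `k`. -/
noncomputable def replacementCost (q : M → ℝ) (lam : ℝ) (k : ℕ) (o s : M) : ℝ :=
  2 * (lam * q o) + (k - 1 : ℕ) * ((1 - lam) * dist o s)

theorem replacementCost_nonneg {q : M → ℝ} (hq : ∀ u, 0 ≤ q u) {lam : ℝ} (hlam0 : 0 ≤ lam)
    (hlam1 : lam ≤ 1) (k : ℕ) (o s : M) : 0 ≤ replacementCost q lam k o s := by
  have := hq o
  have := sub_nonneg.2 hlam1
  unfold replacementCost
  positivity

end ReplacementCost

theorem Qsum_mono {M : Type*} {q : M → ℝ} (hq : ∀ u, 0 ≤ q u) {S T : Finset M} (h : S ⊆ T) :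
    Qsum q S ≤ Qsum q T :=
  sum_le_sum_of_subset_of_nonneg h fun u _ _ ↦ hq u

section Dispersion

variable {M : Type*} [MetricSpace M] [DecidableEq M] {q : M → ℝ} {lam : ℝ}

theorem Dsum_nonneg (S : Finset M) : 0 ≤ Dsum S :=
  sum_nonneg fun _ _ ↦ dist_nonneg

theorem Fobj_nonneg (hq : ∀ u, 0 ≤ q u) (hlam0 : 0 ≤ lam) (hlam1 : lam ≤ 1) (S : Finset M) :
    0 ≤ Fobj q lam S :=
  add_nonneg (mul_nonneg hlam0 (sum_nonneg fun u _ ↦ hq u))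
    (mul_nonneg (sub_nonneg.2 hlam1) (Dsum_nonneg S))

theorem Dsum_image {κ : Type*} {s : Finset κ} {z : κ → M} (hz : Set.InjOn z s) :
    Dsum (s.image z) = ∑ p ∈ s.offDiag, dist (z p.1) (z p.2) := by
  classical
  have offDiag_image : (s.image z).offDiag = s.offDiag.image (Prod.map z z) := by
    ext ⟨u, v⟩
    simp only [mem_offDiag, mem_image, Prod.exists, Prod.map_apply, Prod.mk.injEq]
    grind [Set.InjOn]
  rw [Dsum, offDiag_image, sum_image]
  · rfl
  · rintro ⟨u, v⟩ hp ⟨u', v'⟩ hp' h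
    grind [Set.InjOn]

theorem Dsum_image_eq_two_mul_sum_sum_lt {κ : Type*} [LinearOrder κ] {s : Finset κ} {z : κ → M}
    (hz : Set.InjOn z s) :
    Dsum (s.image z) = 2 * ∑ i ∈ s, ∑ j ∈ s with j < i, dist (z i) (z j) := by
  rw [Dsum_image hz, sum_offDiag_eq_sum_sum_lt s fun i j ↦ dist (z i) (z j)]
  simp only [mul_sum, two_mul, dist_comm]

theorem Dsum_le_sum_dist_add_Dsum_image {O : Finset M} {π : M → M} (hπ : Set.InjOn π O) :
    Dsum O ≤ 2 * ((#O - 1 : ℕ) * ∑ o ∈ O, dist o (π o)) + Dsum (O.image π) := by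
  rw [← sum_offDiag_fst_add_snd, Dsum_image hπ, ← sum_add_distrib]
  refine sum_le_sum fun p _ ↦ ?_
  linarith [dist_triangle4_right p.1 p.2 (π p.1) (π p.2)]

theorem Fobj_le_Fobj_image_add_sum_replacementCost (hq : ∀ u, 0 ≤ q u) (hlam0 : 0 ≤ lam)
    (hlam1 : lam ≤ 1) {O : Finset M} {π : M → M} (hπ : Set.InjOn π O) :
    Fobj q lam O ≤ Fobj q lam (O.image π) +
      2 * ∑ o ∈ O with π o ≠ o, replacementCost q lam (#O) o (π o) := by
  have quality : Qsum q O ≤ Qsum q (O.image π) + ∑ o ∈ O with π o ≠ o, q o := by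
    have fixed_subset : O.filter (fun o ↦ π o = o) ⊆ O.image π := by grind
    rw [Qsum, ← sum_filter_add_sum_filter_not O (fun o ↦ π o = o)]
    gcongr
    exact Qsum_mono hq fixed_subset
  have moved : ∑ o ∈ O, dist o (π o) = ∑ o ∈ O with π o ≠ o, dist o (π o) := by
    symm
    apply sum_filter_of_ne
    intro o _ ho hfix
    exact ho (by rw [hfix, dist_self])
  have dispersion := Dsum_le_sum_dist_add_Dsum_image hπ
  have moved_quality_nonneg : 0 ≤ ∑ o ∈ O with π o ≠ o, q o := sum_nonneg fun o _ ↦ hq o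
  have cost_eq : ∑ o ∈ O with π o ≠ o, replacementCost q lam (#O) o (π o) =
      2 * (lam * ∑ o ∈ O with π o ≠ o, q o) +
        (#O - 1 : ℕ) * ((1 - lam) * ∑ o ∈ O with π o ≠ o, dist o (π o)) := by
    simp only [replacementCost, sum_add_distrib, mul_sum]
  rw [moved] at dispersion
  rw [cost_eq, Fobj, Fobj]
  linarith [mul_le_mul_of_nonneg_left quality hlam0,
    mul_le_mul_of_nonneg_left dispersion (sub_nonneg.2 hlam1),
    mul_nonneg hlam0 moved_quality_nonneg]

theorem IsGreedySel.card_mul_add_sum_sum_lt_le {ι : Type*} {qf : ι → ℝ} {df : ι → ι → ℝ}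
    {a b : ℝ} {T : Finset ι} {k : ℕ} {z : Fin k → ι} (hz : IsGreedySel qf df a b T k z)
    {t : ι} (ht : t ∈ T) (htz : ∀ i, t ≠ z i) :
    k * (a * qf t) + b * ∑ i, ∑ j with j < i, df t (z j) ≤
      a * ∑ i, qf (z i) + b * ∑ i, ∑ j with j < i, df (z i) (z j) := by
  have round_sum := sum_le_sum fun i (_ : i ∈ univ) ↦ hz.2.2.2 i t ht fun j _ ↦ htz j
  simpa only [sum_add_distrib, sum_const, card_univ, Fintype.card_fin, nsmul_eq_mul,
    ← mul_sum] using round_sum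

theorem IsGreedySel.sum_replacementCost_le (hlam1 : lam ≤ 1) {T : Finset M} {k : ℕ} {z : Fin k → M}
    (hz : IsGreedySel q (fun u v ↦ dist u v) lam (1 - lam) T k z)
    {t : M} (ht : t ∈ T \ univ.image z) :
    ∑ s ∈ univ.image z, replacementCost q lam k t s ≤ 2 * Fobj q lam (univ.image z) := by
  obtain ⟨htT, htz⟩ := mem_sdiff.1 ht
  have greedy := hz.card_mul_add_sum_sum_lt_le htT fun i h ↦
    htz (h ▸ mem_image_of_mem z (mem_univ i))
  have pairs := card_sub_one_mul_sum_dist_le univ z t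
  rw [card_univ, Fintype.card_fin] at pairs
  have dispersion := Dsum_image_eq_two_mul_sum_sum_lt (s := univ) hz.1.injOn
  have quality : Qsum q (univ.image z) = ∑ i, q (z i) := sum_image hz.1.injOn
  have cost_eq : ∑ s ∈ univ.image z, replacementCost q lam k t s =
      2 * (k * (lam * q t)) + (1 - lam) * ((k - 1 : ℕ) * ∑ i, dist t (z i)) := by
    rw [sum_image hz.1.injOn]
    simp only [replacementCost, sum_add_distrib, sum_const, card_univ, Fintype.card_fin,
      nsmul_eq_mul, ← mul_sum]
    ring
  rw [cost_eq, Fobj, quality]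
  linarith [mul_le_mul_of_nonneg_left pairs (sub_nonneg.2 hlam1),
    mul_nonneg (sub_nonneg.2 hlam1) (Dsum_nonneg (univ.image z)),
    congrArg ((1 - lam) * ·) dispersion]

end Dispersion

theorem stmt_8_general {M ι : Type*} [MetricSpace M] [DecidableEq M] [Fintype ι]
    {q : M → ℝ} (hq : ∀ u, 0 ≤ q u) {lam : ℝ} (hlam0 : 0 ≤ lam) (hlam1 : lam ≤ 1) {k : ℕ}
    {U : ι → Finset M} (hU : Pairwise (Function.onFun Disjoint U)) {z : ι → Fin k → M}
    (hz : ∀ i, IsGreedySel q (fun u v ↦ dist u v) lam (1 - lam) (U i) k (z i))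
    {P : Finset M} (hP : IsOptSubset q lam (univ.biUnion fun i ↦ univ.image (z i)) k P)
    {O : Finset M} (hO : O ⊆ univ.biUnion U) (hOk : #O = k) :
    Fobj q lam O ≤ 5 * Fobj q lam P := by
  have card_selected (i : ι) : #(univ.image (z i)) = k := by
    rw [card_image_of_injective _ (hz i).1, card_univ, Fintype.card_fin]
  have selected_subset (i : ι) : univ.image (z i) ⊆ U i := image_subset_iff.2 fun j _ ↦ (hz i).2.1 j
  have selected_le (i : ι) : Fobj q lam (univ.image (z i)) ≤ Fobj q lam P :=
    hP.2.2 _ (subset_biUnion_of_mem (fun i ↦ univ.image (z i)) (mem_univ i)) (card_selected i)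
  obtain ⟨π, π_maps, π_inj, π_cost⟩ := exists_injOn_mapsTo_biUnion_sum_le hU selected_subset hO
    (fun i ↦ (hOk.trans (card_selected i).symm).le) (replacementCost_nonneg hq hlam0 hlam1 k)
    (mul_nonneg zero_le_two (Fobj_nonneg hq hlam0 hlam1 P))
    fun i t ht ↦ ((hz i).sum_replacementCost_le hlam1 ht).trans (by gcongr; exact selected_le i)
  have image_le : Fobj q lam (O.image π) ≤ Fobj q lam P :=
    hP.2.2 _ (image_subset_iff.2 π_maps) ((card_image_of_injOn π_inj).trans hOk)
  have move := Fobj_le_Fobj_image_add_sum_replacementCost hq hlam0 hlam1 π_inj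
  rw [hOk] at move
  linarith

theorem stmt_8 {M : Type*} [MetricSpace M] [DecidableEq M]
    (q : M → ℝ) (hq : ∀ u, 0 ≤ q u)
    (lam : ℝ) (hlam0 : 0 < lam) (hlam1 : lam < 1)
    (k l : ℕ)
    (Upart : Fin l → Finset M)
    (hdisj : ∀ i j, i ≠ j → Disjoint (Upart i) (Upart j))
    (hcard : ∀ i, k ≤ (Upart i).card)
    (U : Finset M) (hU : U = Finset.univ.biUnion Upart)
    (z : ∀ _ : Fin l, Fin k → M)
    (hz : ∀ i, IsGreedySel q (fun u v => dist u v) lam (1 - lam) (Upart i) k (z i))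
    (S : Fin l → Finset M) (hS : ∀ i, S i = Finset.univ.image (z i))
    (OptU : Finset M) (hOptU : IsOptSubset q lam (Finset.univ.biUnion S) k OptU)
    (O : Finset M) (hO : IsOptSubset q lam U k O)
    (hk : 2 ≤ k)
    (A : Finset M) (hAsub : A ⊆ Finset.univ.biUnion S) (hAcard : A.card = k)
    (hA : (1 / 2) * Fobj q lam OptU ≤ Fobj q lam A) :
    (1 / 16) * Fobj q lam O ≤ Fobj q lam A := by
  subst hU
  obtain rfl : S = fun i ↦ univ.image (z i) := funext hS
  have := stmt_8_general hq hlam0.le hlam1.le hdisj hz hOptU hO.1 hO.2.1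
  linarith [Fobj_nonneg hq hlam0.le hlam1.le O]
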